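/- Fix a real number c with 0 ≤ c < 1 and set ξ∨ = (c(1−c²) + (1−c)²√(3+4c+c²))/(2√(1−c²)) and η∨ = (1/3)(8 − 7c + 2c³ − 2(1−c)²√(3+4c+c²)). Then ψ(t, ξ∨, η∨) ≤ 0 for all t ∈ [−1,1], the maximum of |ψ(·, ξ∨, η∨)| over [−1,1] equals (27/1024)(1−c)⁴((2+c) − √(3+4c+c²))², this value is at most 27(2−√3)²/1024, and for every pair (ξ, η) with ξ > 0 such that ψ(t, ξ, η) ≤ 0 for all t ∈ [−1,1], sup over t ∈ [−1,1] of |ψ(t, ξ, η)| is at least (27/1024)(1−c)⁴((2+c) − √(3+4c+c²))²; i.e., (ξ∨, η∨) induces the optimal inner quartic G¹ approximant. -/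

import Mathlib

/-- Simplified radial error of the quartic G¹ Bézier approximant of the unit circular arc. -/
noncomputable def psiQ (c t ξ η : ℝ) : ℝ :=
  (t^2 - 1)^2 *
    ((1/64)*(3*η - 4*Real.sqrt (1 - c^2)*ξ - 3*c)^2*t^4
      + (1/64)*(32*c^2*ξ^2 + 32*ξ^2 - 64*c*Real.sqrt (1 - c^2)*ξ
          - 18*η^2 + 36*c*η - 34*c^2 + 16)*t^2
      + (1/64)*((3*η + 4*Real.sqrt (1 - c^2)*ξ + 5*c)^2 - 64))

/-- Sup over `t ∈ [−1,1]` of `|f t|`. -/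
noncomputable def errSup (f : ℝ → ℝ) : ℝ :=
  sSup ((fun t => |f t|) '' Set.Icc (-1 : ℝ) 1)

theorem psiQ_form (c t ξ η : ℝ) (hc0 : 0 ≤ c) (hc1 : c < 1) :
    psiQ c t ξ η = (1 - t^2)^2 *
      ((1/64)*((3*η + 4*(Real.sqrt (1 - c^2)*ξ) + 5*c)^2 - 64) * (1 - t^2)
        + (ξ^2 + (3/4)*(c*η - 1)) * t^2
        - (1/64)*(3*η - 4*(Real.sqrt (1 - c^2)*ξ) - 3*c)^2 * (t^2*(1 - t^2))) := by
  have hs : Real.sqrt (1 - c^2)^2 = 1 - c^2 := Real.sq_sqrt (by nlinarith)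
  unfold psiQ
  generalize Real.sqrt (1 - c^2) = s at *
  linear_combination ((1 - t^2)^2 * t^2 * ξ^2/2) * hs

theorem psiQ_bdd (c ξ η : ℝ) :
    BddAbove ((fun t => |psiQ c t ξ η|) '' Set.Icc (-1 : ℝ) 1) := by
  apply IsCompact.bddAbove_image isCompact_Icc
  unfold psiQ
  fun_prop

theorem quart_bound (x : ℝ) : x*(1 - x)^3 ≤ 27/256 := by
  have : 27/256 - x*(1 - x)^3 = (x - 1/4)^2*((x - 5/4)^2 + 1/8) := by ring
  nlinarith [mul_nonneg (sq_nonneg (x - 1/4)) (add_nonneg (sq_nonneg (x - 5/4)) (by norm_num : (0:ℝ) ≤ 1/8))]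

set_option maxHeartbeats 2000000 in
/-- `(ξ∨, η∨)` induces the optimal inner quartic G¹ approximant, with error
`(27/1024)(1−c)⁴((2+c) − √(3+4c+c²))² ≤ 27(2−√3)²/1024`. -/
theorem stmt_16 (c : ℝ) (hc0 : 0 ≤ c) (hc1 : c < 1)
    (ξv ηv : ℝ)
    (hξv : ξv = (c*(1 - c^2) + (1 - c)^2*Real.sqrt (3 + 4*c + c^2))/(2*Real.sqrt (1 - c^2)))
    (hηv : ηv = (1/3)*(8 - 7*c + 2*c^3 - 2*(1 - c)^2*Real.sqrt (3 + 4*c + c^2))) :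
    (∀ t ∈ Set.Icc (-1 : ℝ) 1, psiQ c t ξv ηv ≤ 0) ∧
    errSup (fun t => psiQ c t ξv ηv)
      = (27/1024)*(1 - c)^4*((2 + c) - Real.sqrt (3 + 4*c + c^2))^2 ∧
    (27/1024)*(1 - c)^4*((2 + c) - Real.sqrt (3 + 4*c + c^2))^2
      ≤ 27*(2 - Real.sqrt 3)^2/1024 ∧
    ∀ ξ η : ℝ, 0 < ξ → (∀ t ∈ Set.Icc (-1 : ℝ) 1, psiQ c t ξ η ≤ 0) →
      (27/1024)*(1 - c)^4*((2 + c) - Real.sqrt (3 + 4*c + c^2))^2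
        ≤ errSup (fun t => psiQ c t ξ η) := by
  have hr2 : Real.sqrt (3 + 4*c + c^2)^2 = 3 + 4*c + c^2 := Real.sq_sqrt (by nlinarith)
  have hr0 : 0 ≤ Real.sqrt (3 + 4*c + c^2) := Real.sqrt_nonneg _
  have hs2 : Real.sqrt (1 - c^2)^2 = 1 - c^2 := Real.sq_sqrt (by nlinarith)
  have hs0 : 0 < Real.sqrt (1 - c^2) := Real.sqrt_pos.mpr (by nlinarith)
  have hform := fun t ξ η => psiQ_form c t ξ η hc0 hc1
  have hy : Real.sqrt (1 - c^2)*ξv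
      = (c*(1 - c^2) + (1 - c)^2*Real.sqrt (3 + 4*c + c^2))/2 := by
    rw [hξv]; field_simp
  have hr1 : 1 + c ≤ Real.sqrt (3 + 4*c + c^2) := Real.le_sqrt_of_sq_le (by nlinarith)
  have hr3 : Real.sqrt 3 ≤ Real.sqrt (3 + 4*c + c^2) := Real.sqrt_le_sqrt (by nlinarith)
  have h30 : 0 ≤ Real.sqrt 3 := Real.sqrt_nonneg _
  have h32 : Real.sqrt 3^2 = 3 := Real.sq_sqrt (by norm_num)
  have hbdd := fun ξ η => psiQ_bdd c ξ η
  generalize Real.sqrt (1 - c^2) = s at *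
  generalize Real.sqrt (3 + 4*c + c^2) = r at *
  generalize Real.sqrt 3 = w at *
  have hc2 : 0 < 1 - c^2 := by nlinarith
  have hq1 : ξv^2 + (3/4)*(c*ηv - 1) = 0 := by
    have h1 : (1 - c^2)*ξv^2 = ((c*(1 - c^2) + (1 - c)^2*r)/2)^2 := by
      rw [← hy, mul_pow, hs2]
    have h2 : (1 - c^2)*(ξv^2 + (3/4)*(c*ηv - 1)) = 0 := by
      rw [mul_add, h1, hηv]
      linear_combination ((1 - c)^4/4) * hr2
    rcases mul_eq_zero.mp h2 with h | h
    · linarith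
    · exact h
  have hlt : r ≤ 2 + c := abs_le_of_sq_le_sq' (by linarith : r^2 ≤ (2 + c)^2) (by linarith) |>.2
  have hv : ∀ t, psiQ c t ξv ηv
      = -((1/4)*(1 - c)^4*((2 + c) - r)^2 * (t^2*(1 - t^2)^3)) := by
    intro t
    rw [hform, hq1, hy, hηv]
    ring
  have hprod : ((2 + c) - r)*((2 + c) + r) = 1 := by linear_combination -hr2
  have hK : 0 ≤ (1/4)*(1 - c)^4*((2 + c) - r)^2 := by positivity
  have ht01 : ∀ t ∈ Set.Icc (-1 : ℝ) 1, 0 ≤ t^2 ∧ t^2 ≤ 1 := by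
    rintro t ⟨h1, h2⟩
    exact ⟨sq_nonneg t, by nlinarith⟩
  have hpos : ∀ t ∈ Set.Icc (-1 : ℝ) 1, 0 ≤ t^2*(1 - t^2)^3 := by
    intro t ht
    obtain ⟨h1, h2⟩ := ht01 t ht
    exact mul_nonneg h1 (pow_nonneg (by linarith) 3)
  have hhalf : (1/2 : ℝ) ∈ Set.Icc (-1 : ℝ) 1 := by constructor <;> norm_num
  refine ⟨?_, ?_, ?_, ?_⟩
  · intro t ht
    rw [hv]
    have := mul_nonneg hK (hpos t ht)
    linarith
  · unfold errSup
    apply IsGreatest.csSup_eq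
    constructor
    · refine ⟨1/2, hhalf, ?_⟩
      simp only [hv]
      rw [abs_neg, abs_of_nonneg (mul_nonneg hK (hpos _ hhalf))]
      ring
    · rintro _ ⟨t, ht, rfl⟩
      simp only [hv]
      rw [abs_neg, abs_of_nonneg (mul_nonneg hK (hpos _ ht))]
      have h := quart_bound (t^2)
      have := mul_le_mul_of_nonneg_left h hK
      linarith
  · have hw2 : 0 < 2 - w := sub_pos.mpr (lt_of_pow_lt_pow_left₀ 2 (by norm_num) (by rw [h32]; norm_num))
    have h1 : (2 + c) - r ≤ 2 - w := by
      have e : (2 - w)*(2 + w) = 1 := by linear_combination -h32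
      have : 0 ≤ (2 - w)*((2 + c + r) - (2 + w)) := mul_nonneg hw2.le (by linarith)
      have h3 : ((2 + c) - r)*((2 + c) + r) ≤ (2 - w)*((2 + c) + r) := by linarith
      exact le_of_mul_le_mul_right h3 (by linarith)
    have h2 : ((2 + c) - r)^2 ≤ (2 - w)^2 := pow_le_pow_left₀ (by linarith) h1 2
    have h3 : (1 - c)^4 ≤ 1 := pow_le_one₀ (by linarith) (by linarith)
    have h4 := mul_le_mul h3 h2 (sq_nonneg _) (by norm_num)
    linarith
  · intro ξ η hξ hin
    have hle : |psiQ c (1/2) ξ η| ≤ errSup (fun t => psiQ c t ξ η) :=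
      le_csSup (hbdd ξ η) ⟨1/2, hhalf, rfl⟩
    refine le_trans ?_ hle
    refine le_trans ?_ (neg_le_abs _)
    -- constraint at 0
    have hz := hin 0 (by constructor <;> norm_num)
    rw [hform] at hz
    -- constraint at the end point
    have hone : ξ^2 + (3/4)*(c*η - 1) ≤ 0 := by
      set a : ℝ := (1/64)*((3*η + 4*(s*ξ) + 5*c)^2 - 64) with ha
      set b : ℝ := ξ^2 + (3/4)*(c*η - 1) with hb
      set d : ℝ := (1/64)*(3*η - 4*(s*ξ) - 3*c)^2 with hd
      have hx : ∀ x ∈ Set.Ico (0:ℝ) 1, a*(1 - x) + b*x - d*(x*(1 - x)) ≤ 0 := by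
        rintro x ⟨h0, h1⟩
        have h := hin (Real.sqrt x) ⟨by linarith [Real.sqrt_nonneg x],
          Real.sqrt_le_one.mpr h1.le⟩
        rw [hform, Real.sq_sqrt h0, ← ha, ← hb, ← hd] at h
        have hp : 0 < (1 - x)^2 := pow_pos (by linarith) 2
        by_contra hcon
        push Not at hcon
        have := mul_pos hp hcon
        linarith
      have hcl : (1:ℝ) ∈ closure (Set.Ico (0:ℝ) 1) := by
        rw [closure_Ico (by norm_num)]; constructor <;> norm_num
      have hcont : Continuous (fun x : ℝ => a*(1 - x) + b*x - d*(x*(1 - x))) := by fun_prop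
      have := closure_minimal (s := Set.Ico (0:ℝ) 1)
        (t := {x | a*(1 - x) + b*x - d*(x*(1 - x)) ≤ 0}) hx
        (isClosed_le hcont continuous_const) hcl
      simp only [Set.mem_ofPred_eq] at this
      linarith
    have hB0 : 0 < s*ξ := mul_pos hs0 hξ
    have hq : (s*ξ)^2 + (3/4)*(1 - c^2)*(c*η - 1) ≤ 0 := by
      rw [mul_pow, hs2]
      have := mul_nonneg hc2.le (neg_nonneg.mpr hone)
      linarith
    rw [hform]
    obtain ⟨y, hydef⟩ : ∃ y, y = s*ξ := ⟨_, rfl⟩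
    rw [← hydef] at hz hB0 hq ⊢
    obtain ⟨h, hh⟩ : ∃ h, h = 2 + c - r := ⟨_, rfl⟩
    obtain ⟨P, hP⟩ : ∃ P, P = 8 - (3*η + 4*y + 5*c) := ⟨_, rfl⟩
    obtain ⟨D, hD⟩ : ∃ D, D = 3*η - 4*y - 3*c := ⟨_, rfl⟩
    have hh0 : 0 ≤ h := by linarith
    have hh1 : h ≤ 1/2 := by
      have h5 : 0 ≤ h*(c + r) := mul_nonneg hh0 (by linarith)
      rw [← hh] at hprod
      linarith
    have hPP : 0 ≤ P*(16 - P) := by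
      have : 0 ≤ 64 - (8 - P)^2 := by
        rw [hP]; linarith
      linarith
    have hP0 : 0 ≤ P := by
      by_contra hcon
      push Not at hcon
      have := mul_pos (neg_pos.mpr hcon) (by linarith : 0 < 16 - P)
      linarith
    have key : (4*(1 - c)^2*h)^2 ≤ 4*(P*(16 - P)) + D^2 := by
      have hDs0 : 0 ≤ 4*(1 - c)^2*h := by positivity
      have hDs2 : 4*(1 - c)^2*h ≤ 2 := by
        have : (1 - c)^2 ≤ 1 := pow_le_one₀ (by linarith) (by linarith)
        have := mul_le_mul this hh1 hh0 (by norm_num)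
        linarith
      by_cases hcase : (4*(1 - c)^2*h)^2 ≤ D^2
      · linarith
      push Not at hcase
      have habs := abs_lt_of_sq_lt_sq' hcase hDs0
      obtain ⟨hl, hu⟩ := habs
      have hP10 : P ≤ 10 := by
        have : 8*y = 8*(1 - c) - D - P := by rw [hD, hP]; ring
        linarith
      have hd : (1 - c)*(4*(1 - c)^2*h - D) ≤ P*(1 + c) := by
        set δ := 4*(1 - c)^2*h - D with hδ
        have hδ0 : 0 < δ := by linarith
        obtain ⟨ys, hys⟩ : ∃ z, z = (c*(1 - c^2) + (1 - c)^2*r)/2 := ⟨_, rfl⟩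
        have hys2 : ys^2 + (3/4)*(1 - c^2)*(c*ηv - 1) = 0 := by
          rw [hys, hηv]
          linear_combination ((1 - c)^4/4) * hr2
        have e1 : 8*(y - ys) = δ - P := by
          rw [hδ, hys, hD, hP, hh]; ring
        have e2 : 6*(η - ηv) = -δ - P := by
          rw [hδ, hηv, hD, hP, hh]; ring
        have e3 : 2*ys*(y - ys) + (3/4)*(1 - c^2)*c*(η - ηv) ≤ 0 := by
          linarith [sq_nonneg (y - ys)]
        have e4 : (1 - c)^2*r*δ ≤ P*((1 - c)^2*r + 2*c*(1 - c^2)) := by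
          have t1 : y - ys = (δ - P)/8 := by linarith
          have t2 : η - ηv = (-δ - P)/6 := by linarith
          rw [t1, t2, hys] at e3
          linarith
        have e5 : (1 - c)*r*δ ≤ P*((1 - c)*r + 2*c*(1 + c)) := by
          have hc' : 0 < 1 - c := by linarith
          refine le_of_mul_le_mul_left ?_ hc'
          linarith
        have e6 : P*((1 - c)*r + 2*c*(1 + c)) ≤ P*(r*(1 + c)) := by
          apply mul_le_mul_of_nonneg_left _ hP0
          have := mul_le_mul_of_nonneg_left hr1 hc0
          linarith
        have hrp : 0 < r := by linarith
        refine le_of_mul_le_mul_left ?_ hrp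
        linarith
      have f1 : (4*(1 - c)^2*h - D)*(4*(1 - c)^2*h + D)
          ≤ (4*(1 - c)^2*h - D)*(8*(1 - c)^2*h) :=
        mul_le_mul_of_nonneg_left (by linarith) (by linarith)
      have f2 := mul_le_mul_of_nonneg_right hd
        (mul_nonneg (mul_nonneg (by norm_num : (0:ℝ) ≤ 8) (by linarith : 0 ≤ 1 - c)) hh0)
      have f3 : (1 - c^2)*h ≤ 1/2 := by
        have := mul_nonneg (sq_nonneg c) hh0
        linarith
      have f4 := mul_le_mul_of_nonneg_left f3 hP0
      have f5 : 0 ≤ P*(10 - P) := mul_nonneg hP0 (by linarith)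
      linarith
    rw [← hD, show 3*η + 4*y + 5*c = 8 - P by rw [hP]; ring, ← hh]
    have hone' := hone
    linarith
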